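/- arXiv:2102.10609 — 4 statements merged into one kernel-verified Lean document; each statement's English description precedes it below -/
import Mathlib

section
/- Let n ≥ 1. For every permutation σ of {1,…,n} and every ε : {1,…,n} → {1,−1}, there exists a totally nonzero tuple v : {1,…,n} → ℝ² such that for all i ≠ j, sgn(det(v_i | v_j)) = ε_i·ε_j·sgn(σ(j) − σ(i)). -/
/-- The determinant of the 2×2 matrix with columns `v` and `w`. -/
noncomputable def det2 (v w : ℝ × ℝ) : ℝ := v.1 * w.2 - v.2 * w.1

/-- A tuple `v : Fin n → ℝ²` is totally nonzero if `det (v i | v j) ≠ 0` for all `i ≠ j`. -/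
def TotallyNonzero (n : ℕ) (v : Fin n → ℝ × ℝ) : Prop :=
  ∀ i j : Fin n, i ≠ j → det2 (v i) (v j) ≠ 0

/-!
On the vertical line `x = 1` the determinant of two vectors is the difference of their heights, so
it records the order of the heights. Negating a vector moves it to the opposite line and flips the
sign of every determinant containing it. Hence `v i = ε i • (1, σ i)` realizes the pattern.
-/

theorem det2_smul_smul (a b : ℝ) (v w : ℝ × ℝ) :
    det2 (a • v) (b • w) = a * b * det2 v w := by
  simp only [det2, Prod.smul_fst, Prod.smul_snd, smul_eq_mul]
  ring

theorem det2_one_mk (x y : ℝ) : det2 (1, x) (1, y) = y - x := by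
  simp only [det2, one_mul, mul_one]

theorem sign_mul_of_eq_one_or_eq_neg_one {s : ℝ} (hs : s = 1 ∨ s = -1) (x : ℝ) :
    Real.sign (s * x) = s * Real.sign x := by
  rcases hs with rfl | rfl
  · simp only [one_mul]
  · simp only [neg_one_mul, Real.sign_neg]

theorem stmt_2_general {ι : Type*} {τ : ι → ℝ} (hτ : Function.Injective τ) {ε : ι → ℝ}
    (hε : ∀ i, ε i = 1 ∨ ε i = -1) :
    ∃ v : ι → ℝ × ℝ, (∀ i j, i ≠ j → det2 (v i) (v j) ≠ 0) ∧
      ∀ i j, Real.sign (det2 (v i) (v j)) = ε i * ε j * Real.sign (τ j - τ i) := by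
  have hdet (i j : ι) :
      det2 (ε i • (1, τ i)) (ε j • (1, τ j)) = ε i * ε j * (τ j - τ i) := by
    rw [det2_smul_smul, det2_one_mk]
  have ε_ne_zero (i : ι) : ε i ≠ 0 := by
    rcases hε i with h | h <;> norm_num [h]
  refine ⟨fun i ↦ ε i • (1, τ i), fun i j hij ↦ ?_, fun i j ↦ ?_⟩
  · rw [hdet]
    exact mul_ne_zero (mul_ne_zero (ε_ne_zero i) (ε_ne_zero j)) (sub_ne_zero.mpr (hτ.ne hij.symm))
  · rw [hdet, mul_assoc, sign_mul_of_eq_one_or_eq_neg_one (hε i),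
      sign_mul_of_eq_one_or_eq_neg_one (hε j), ← mul_assoc]

/-- every sign pattern given by a permutation `σ` and signs `ε` is realized by
some totally nonzero tuple `v : Fin n → ℝ²`. -/
theorem stmt_2 (n : ℕ) (hn : 1 ≤ n) (σ : Equiv.Perm (Fin n)) (ε : Fin n → ℝ)
    (hε : ∀ i, ε i = 1 ∨ ε i = -1) :
    ∃ v : Fin n → ℝ × ℝ, TotallyNonzero n v ∧
      ∀ i j : Fin n, i ≠ j →
        Real.sign (det2 (v i) (v j)) =
          ε i * ε j * Real.sign (((σ j : ℕ) : ℝ) - ((σ i : ℕ) : ℝ)) := by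
  obtain ⟨v, hv, hsign⟩ := stmt_2_general
    (Nat.cast_injective.comp (Fin.val_injective.comp σ.injective)) hε
  exact ⟨v, hv, fun i j _ ↦ hsign i j⟩
end

section
/- For every integer n ≥ 2, the set 𝒪_n of orientation sign matrices of totally nonzero tuples v : {1,…,n} → ℝ² has cardinality 2^{n−1}·(n−1)!. -/
/-- The orientation sign matrix of a tuple: `(O_v)_{ij} = sgn (det (v i | v j))`. -/
noncomputable def orientMatrix (n : ℕ) (v : Fin n → ℝ × ℝ) : Matrix (Fin n) (Fin n) ℝ :=
  Matrix.of fun i j => Real.sign (det2 (v i) (v j))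

/-! Fix the first vector `u` of the tuple. Every other vector `v` is recorded by two data: the side
of the line `ℝ u` on which it lies, and the line `ℝ v` itself. The lines other than `ℝ u` are
linearly ordered by the negative cotangent of the oriented angle from `u`, and for `v`, `w` off
`ℝ u` the sign of `det (v | w)` is the product of the two sides and of the comparison of the two
lines. Hence the orientation sign matrix amounts to the `n - 1` sides together with the order of the
`n - 1` lines, and each of the `2 ^ (n - 1) * (n - 1)!` combinations of these occurs. -/

theorem forall_sign_sub_eq_iff_forall_lt_iff_lt {ι α β : Type*}
    [AddGroup α] [LinearOrder α] [AddRightStrictMono α]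
    [AddGroup β] [LinearOrder β] [AddRightStrictMono β] {x : ι → α} {y : ι → β} :
    (∀ i j, SignType.sign (x j - x i) = SignType.sign (y j - y i)) ↔
      ∀ i j, x i < x j ↔ y i < y j := by
  refine ⟨fun h i j => ?_, fun h i j => ?_⟩
  · rw [← sub_pos, ← sign_eq_one_iff, h, sign_eq_one_iff, sub_pos]
  · rcases lt_trichotomy (x i) (x j) with hlt | heq | hgt
    · rw [sign_pos (sub_pos.mpr hlt), sign_pos (sub_pos.mpr ((h i j).mp hlt))]
    · have hy : y i = y j := le_antisymm (not_lt.mp ((h j i).not.mp heq.not_gt))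
        (not_lt.mp ((h i j).not.mp heq.not_lt))
      rw [heq, hy, sub_self, sub_self, sign_zero, sign_zero]
    · rw [sign_neg (sub_neg.mpr hgt), sign_neg (sub_neg.mpr ((h j i).mp hgt))]

theorem exists_perm_lt_iff_lt {n : ℕ} {α : Type*} [LinearOrder α] {x : Fin n → α}
    (hx : Function.Injective x) : ∃ σ : Equiv.Perm (Fin n), ∀ i j, σ i < σ j ↔ x i < x j := by
  have hmono : StrictMono (x ∘ Tuple.sort x) :=
    (Tuple.monotone_sort x).strictMono_of_injective (hx.comp (Tuple.sort x).injective)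
  exact ⟨(Tuple.sort x).symm, fun i j => by simp [← hmono.lt_iff_lt]⟩

theorem perm_eq_of_forall_lt_iff_lt {n : ℕ} {σ τ : Equiv.Perm (Fin n)}
    (h : ∀ i j, σ i < σ j ↔ τ i < τ j) : σ = τ := by
  have hmono : StrictMono (τ * σ⁻¹) := fun a b hab => by
    simpa using (h (σ⁻¹ a) (σ⁻¹ b)).mp (by simpa using hab)
  exact (mul_inv_eq_one.mp ((Equiv.Perm.monotone_iff _).mp hmono.monotone)).symm

theorem real_sign_eq_coe_sign (a : ℝ) : Real.sign a = (SignType.sign a : ℝ) := by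
  rcases lt_trichotomy a 0 with ha | rfl | ha
  · simp [Real.sign_of_neg ha, sign_neg ha]
  · simp
  · simp [Real.sign_of_pos ha, sign_pos ha]

theorem sign_coe_signType {α : Type*} [Ring α] [PartialOrder α] [IsOrderedRing α] [Nontrivial α]
    [DecidableLT α] (s : SignType) : SignType.sign (s : α) = s := by
  cases s <;> simp

theorem real_sign_eq_real_sign_iff {a b : ℝ} :
    Real.sign a = Real.sign b ↔ SignType.sign a = SignType.sign b := by
  have hcoe : Function.Injective ((↑) : SignType → ℝ) :=
    Function.LeftInverse.injective sign_coe_signType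
  rw [real_sign_eq_coe_sign, real_sign_eq_coe_sign, hcoe.eq_iff]

theorem orientMatrix_eq_iff_forall_sign_eq {n : ℕ} {v w : Fin n → ℝ × ℝ} :
    orientMatrix n v = orientMatrix n w ↔
      ∀ i j, SignType.sign (det2 (v i) (v j)) = SignType.sign (det2 (w i) (w j)) := by
  simp only [orientMatrix, ← Matrix.ext_iff, Matrix.of_apply, real_sign_eq_real_sign_iff]

theorem det2_self (v : ℝ × ℝ) : det2 v v = 0 := by
  simp only [det2]
  ring

theorem neg_det2 (v w : ℝ × ℝ) : -det2 v w = det2 w v := by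
  simp only [det2]
  ring

/-- The negative cotangent of the oriented angle from `u` to `v`. It depends only on the line `ℝ v`,
and grows as this line turns counterclockwise from `ℝ u` back to `ℝ u`. The value is junk when
`det2 u v = 0`. -/
noncomputable def negCot (u v : ℝ × ℝ) : ℝ := -(u.1 * v.1 + u.2 * v.2) / det2 u v

section negCot

variable {u v w : ℝ × ℝ}

theorem det2_mul_det2_mul_negCot_sub_negCot (hv : det2 u v ≠ 0) (hw : det2 u w ≠ 0) :
    det2 u v * det2 u w * (negCot u w - negCot u v) = (u.1 ^ 2 + u.2 ^ 2) * det2 v w := by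
  simp only [negCot]
  field_simp
  simp only [det2]
  ring

theorem sq_add_sq_pos_of_det2_ne_zero (h : det2 u v ≠ 0) : 0 < u.1 ^ 2 + u.2 ^ 2 := by
  contrapose! h
  have hfst : u.1 = 0 := by nlinarith [sq_nonneg u.1, sq_nonneg u.2]
  have hsnd : u.2 = 0 := by nlinarith [sq_nonneg u.1, sq_nonneg u.2]
  simp [det2, hfst, hsnd]

theorem sign_det2_eq_mul_sign_negCot_sub_negCot (hv : det2 u v ≠ 0) (hw : det2 u w ≠ 0) :
    SignType.sign (det2 v w) = SignType.sign (det2 u v) * SignType.sign (det2 u w) *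
      SignType.sign (negCot u w - negCot u v) := by
  rw [← sign_mul, ← sign_mul, det2_mul_det2_mul_negCot_sub_negCot hv hw, sign_mul,
    sign_pos (sq_add_sq_pos_of_det2_ne_zero hv), one_mul]

theorem det2_eq_zero_iff_negCot_eq (hv : det2 u v ≠ 0) (hw : det2 u w ≠ 0) :
    det2 v w = 0 ↔ negCot u v = negCot u w := by
  rw [← mul_eq_zero_iff_left (sq_add_sq_pos_of_det2_ne_zero hv).ne',
    ← det2_mul_det2_mul_negCot_sub_negCot hv hw, mul_eq_zero_iff_left (mul_ne_zero hv hw),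
    sub_eq_zero, eq_comm]

end negCot

section baseVector

variable {m : ℕ} {v w : Fin (m + 1) → ℝ × ℝ}

theorem totallyNonzero_succ_iff :
    TotallyNonzero (m + 1) v ↔ (∀ i : Fin m, det2 (v 0) (v i.succ) ≠ 0) ∧
      Function.Injective fun i : Fin m => negCot (v 0) (v i.succ) := by
  refine ⟨fun h => ?_, fun ⟨h₀, hinj⟩ i j hij => ?_⟩
  · have h₀ : ∀ i : Fin m, det2 (v 0) (v i.succ) ≠ 0 := fun i => h _ _ i.succ_ne_zero.symm
    refine ⟨h₀, fun i j heq => ?_⟩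
    by_contra hij
    exact h _ _ ((Fin.succ_injective m).ne hij)
      ((det2_eq_zero_iff_negCot_eq (h₀ i) (h₀ j)).mpr heq)
  · cases i using Fin.cases <;> cases j using Fin.cases
    case zero.zero => exact absurd rfl hij
    case zero.succ j => exact h₀ j
    case succ.zero i => exact neg_det2 _ _ ▸ neg_ne_zero.mpr (h₀ i)
    case succ.succ i j =>
      rw [Ne, det2_eq_zero_iff_negCot_eq (h₀ i) (h₀ j)]
      exact hinj.ne fun h => hij (congrArg Fin.succ h)

theorem forall_sign_det2_eq_iff_forall_succ :
    (∀ i j, SignType.sign (det2 (v i) (v j)) = SignType.sign (det2 (w i) (w j))) ↔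
      (∀ i : Fin m, SignType.sign (det2 (v 0) (v i.succ)) =
        SignType.sign (det2 (w 0) (w i.succ))) ∧
      ∀ i j : Fin m, SignType.sign (det2 (v i.succ) (v j.succ)) =
        SignType.sign (det2 (w i.succ) (w j.succ)) := by
  refine ⟨fun h => ⟨fun i => h _ _, fun i j => h _ _⟩, fun ⟨h₀, h⟩ i j => ?_⟩
  cases i using Fin.cases <;> cases j using Fin.cases
  case zero.zero => rw [det2_self, det2_self]
  case zero.succ j => exact h₀ j
  case succ.zero i => rw [← neg_det2, ← neg_det2 (w 0), Left.sign_neg, Left.sign_neg, h₀]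
  case succ.succ i j => exact h i j

theorem orientMatrix_eq_iff_sign_eq_and_negCot_lt_iff (hv : TotallyNonzero (m + 1) v)
    (hw : TotallyNonzero (m + 1) w) :
    orientMatrix (m + 1) v = orientMatrix (m + 1) w ↔
      (∀ i : Fin m, SignType.sign (det2 (v 0) (v i.succ)) =
        SignType.sign (det2 (w 0) (w i.succ))) ∧
      ∀ i j : Fin m, negCot (v 0) (v i.succ) < negCot (v 0) (v j.succ) ↔
        negCot (w 0) (w i.succ) < negCot (w 0) (w j.succ) := by
  have hv₀ := (totallyNonzero_succ_iff.mp hv).1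
  have hw₀ := (totallyNonzero_succ_iff.mp hw).1
  rw [orientMatrix_eq_iff_forall_sign_eq, forall_sign_det2_eq_iff_forall_succ,
    ← forall_sign_sub_eq_iff_forall_lt_iff_lt]
  refine and_congr_right fun hside => forall₂_congr fun i j => ?_
  rw [sign_det2_eq_mul_sign_negCot_sub_negCot (hv₀ i) (hv₀ j),
    sign_det2_eq_mul_sign_negCot_sub_negCot (hw₀ i) (hw₀ j), ← hside i, ← hside j]
  exact mul_right_inj' (mul_ne_zero (sign_ne_zero.mpr (hv₀ i)) (sign_ne_zero.mpr (hv₀ j)))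

end baseVector

/-- The tuple with first vector `(1, 0)` whose other vectors lie on the sides `s` of the horizontal
axis and have negative cotangents `x`. Units of `SignType` encode the two nonzero signs. -/
def tupleOfSidesNegCots {m : ℕ} (s : Fin m → SignTypeˣ) (x : Fin m → ℝ) :
    Fin (m + 1) → ℝ × ℝ :=
  Fin.cons (1, 0) fun i => ((s i : SignType) : ℝ) • (-x i, 1)

section tupleOfSidesNegCots

variable {m : ℕ} (s : Fin m → SignTypeˣ) (x : Fin m → ℝ)

theorem det2_tupleOfSidesNegCots_zero_succ (i : Fin m) :
    det2 (tupleOfSidesNegCots s x 0) (tupleOfSidesNegCots s x i.succ) =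
      ((s i : SignType) : ℝ) := by
  simp [tupleOfSidesNegCots, det2]

theorem sign_det2_tupleOfSidesNegCots_zero_succ (i : Fin m) :
    SignType.sign (det2 (tupleOfSidesNegCots s x 0) (tupleOfSidesNegCots s x i.succ)) = s i := by
  rw [det2_tupleOfSidesNegCots_zero_succ, sign_coe_signType]

theorem det2_tupleOfSidesNegCots_zero_succ_ne_zero (i : Fin m) :
    det2 (tupleOfSidesNegCots s x 0) (tupleOfSidesNegCots s x i.succ) ≠ 0 := by
  rw [← sign_ne_zero, sign_det2_tupleOfSidesNegCots_zero_succ]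
  exact (s i).ne_zero

theorem negCot_tupleOfSidesNegCots_zero_succ (i : Fin m) :
    negCot (tupleOfSidesNegCots s x 0) (tupleOfSidesNegCots s x i.succ) = x i := by
  rw [negCot, div_eq_iff (det2_tupleOfSidesNegCots_zero_succ_ne_zero s x i),
    det2_tupleOfSidesNegCots_zero_succ]
  simp [tupleOfSidesNegCots, mul_comm]

theorem totallyNonzero_tupleOfSidesNegCots_iff :
    TotallyNonzero (m + 1) (tupleOfSidesNegCots s x) ↔ Function.Injective x := by
  simp only [totallyNonzero_succ_iff, negCot_tupleOfSidesNegCots_zero_succ,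
    and_iff_right (det2_tupleOfSidesNegCots_zero_succ_ne_zero s x)]

end tupleOfSidesNegCots

/-- The totally nonzero tuple based at `(1, 0)` with sides `p.1` and with lines in the order given
by the ranks `p.2`. -/
noncomputable def tupleOfSidesRanks {m : ℕ} (p : (Fin m → SignTypeˣ) × Equiv.Perm (Fin m)) :
    Fin (m + 1) → ℝ × ℝ :=
  tupleOfSidesNegCots p.1 fun i => ((p.2 i : ℕ) : ℝ)

theorem totallyNonzero_tupleOfSidesRanks {m : ℕ}
    (p : (Fin m → SignTypeˣ) × Equiv.Perm (Fin m)) :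
    TotallyNonzero (m + 1) (tupleOfSidesRanks p) :=
  (totallyNonzero_tupleOfSidesNegCots_iff _ _).mpr
    (Nat.cast_injective.comp (Fin.val_injective.comp p.2.injective))

theorem orientMatrix_tupleOfSidesRanks_eq_iff {m : ℕ}
    {p : (Fin m → SignTypeˣ) × Equiv.Perm (Fin m)} {v : Fin (m + 1) → ℝ × ℝ}
    (hv : TotallyNonzero (m + 1) v) :
    orientMatrix (m + 1) (tupleOfSidesRanks p) = orientMatrix (m + 1) v ↔
      (∀ i, (p.1 i : SignType) = SignType.sign (det2 (v 0) (v i.succ))) ∧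
      ∀ i j, p.2 i < p.2 j ↔ negCot (v 0) (v i.succ) < negCot (v 0) (v j.succ) := by
  rw [orientMatrix_eq_iff_sign_eq_and_negCot_lt_iff (totallyNonzero_tupleOfSidesRanks p) hv]
  simp only [tupleOfSidesRanks, sign_det2_tupleOfSidesNegCots_zero_succ,
    negCot_tupleOfSidesNegCots_zero_succ, Nat.cast_lt, Fin.val_fin_lt]

theorem orientMatrix_tupleOfSidesRanks_injective (m : ℕ) :
    Function.Injective fun p : (Fin m → SignTypeˣ) × Equiv.Perm (Fin m) =>
      orientMatrix (m + 1) (tupleOfSidesRanks p) := by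
  intro p q hpq
  obtain ⟨hside, hrank⟩ :=
    (orientMatrix_tupleOfSidesRanks_eq_iff (totallyNonzero_tupleOfSidesRanks q)).mp hpq
  simp only [tupleOfSidesRanks, sign_det2_tupleOfSidesNegCots_zero_succ, Units.val_inj] at hside
  simp only [tupleOfSidesRanks, negCot_tupleOfSidesNegCots_zero_succ, Nat.cast_lt,
    Fin.val_fin_lt] at hrank
  exact Prod.ext (funext hside) (perm_eq_of_forall_lt_iff_lt hrank)

theorem exists_orientMatrix_tupleOfSidesRanks_eq {m : ℕ} {v : Fin (m + 1) → ℝ × ℝ}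
    (hv : TotallyNonzero (m + 1) v) :
    ∃ p, orientMatrix (m + 1) (tupleOfSidesRanks p) = orientMatrix (m + 1) v := by
  obtain ⟨h₀, hinj⟩ := totallyNonzero_succ_iff.mp hv
  obtain ⟨σ, hσ⟩ := exists_perm_lt_iff_lt hinj
  exact ⟨(fun i => Units.mk0 _ (sign_ne_zero.mpr (h₀ i)), σ),
    (orientMatrix_tupleOfSidesRanks_eq_iff hv).mpr ⟨fun _ => rfl, hσ⟩⟩

theorem setOf_orientMatrix_succ_eq_range (m : ℕ) :
    {A : Matrix (Fin (m + 1)) (Fin (m + 1)) ℝ |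
        ∃ v : Fin (m + 1) → ℝ × ℝ, TotallyNonzero (m + 1) v ∧ A = orientMatrix (m + 1) v} =
      Set.range fun p : (Fin m → SignTypeˣ) × Equiv.Perm (Fin m) =>
        orientMatrix (m + 1) (tupleOfSidesRanks p) := by
  ext A
  constructor
  · rintro ⟨v, hv, rfl⟩
    exact exists_orientMatrix_tupleOfSidesRanks_eq hv
  · rintro ⟨p, rfl⟩
    exact ⟨_, totallyNonzero_tupleOfSidesRanks p, rfl⟩

theorem card_signTypeUnits_pi_prod_perm (m : ℕ) :
    Nat.card ((Fin m → SignTypeˣ) × Equiv.Perm (Fin m)) = 2 ^ m * m.factorial := by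
  have hcard : Fintype.card SignTypeˣ = 2 := by rw [Fintype.card_units]; rfl
  simp [Fintype.card_perm, hcard]

/-- for `n ≥ 2`, the set `𝒪_n` of orientation sign matrices of totally nonzero
tuples `v : Fin n → ℝ²` has cardinality `2^(n-1) · (n-1)!`. -/
theorem stmt_3 (n : ℕ) (hn : 2 ≤ n) :
    {A : Matrix (Fin n) (Fin n) ℝ |
        ∃ v : Fin n → ℝ × ℝ, TotallyNonzero n v ∧ A = orientMatrix n v}.ncard =
      2 ^ (n - 1) * Nat.factorial (n - 1) := by
  obtain ⟨m, rfl⟩ : ∃ m, n = m + 1 := ⟨n - 1, by omega⟩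
  rw [setOf_orientMatrix_succ_eq_range,
    Set.ncard_range_of_injective (orientMatrix_tupleOfSidesRanks_injective m),
    card_signTypeUnits_pi_prod_perm, Nat.add_sub_cancel]
end

section
/- Let n ≥ 1. The map ζ is a permutation of {1,−1}^n of order exactly 2n, and the number of orbits of the cyclic group generated by ζ acting on {1,−1}^n (equivalently, the number of equivalence classes of {1,−1}^n under the relation d ∼ e iff e = ζ^i(d) for some i ≥ 0) equals (1/(2n))·Σ_{k ∣ n, k odd} φ(k)·2^{n/k}, where φ is the Euler totient function. -/
/-- The signed cyclic shift `ζ` on `{±1}^n`: `(ζ d)_0 = -d_{n-1}` and `(ζ d)_k = d_{k-1}`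
for `k ≥ 1` (0-based indexing). -/
def zeta (n : ℕ) (d : Fin n → ℤˣ) : Fin n → ℤˣ := fun k =>
  if (k : ℕ) = 0 then -d ⟨n - 1, Nat.sub_lt k.pos Nat.one_pos⟩
  else d ⟨(k : ℕ) - 1, Nat.lt_of_le_of_lt (Nat.sub_le _ _) k.isLt⟩

/-!
A sign vector of length `n` is the restriction to `0, …, n - 1` of a unique `n`-antiperiodic
function `f : ℤ → {±1}`, and under this correspondence `ζ` becomes translation by `1`. Hence
`ζ ^ (2n)` is the identity, while the orbit of the constant vector `1` has exactly `2n` elements.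
Burnside's lemma for a cyclic group of order `N` expresses the number of orbits through the fixed
points of `ζ ^ (N / k)` for `k ∣ N`; here `N = 2n`. If `k` is even, then `2n / k` divides `n`,
and a divisor of an antiperiod is never a period. If `k` is odd, then `n = hk`, and a function is
both `hk`-antiperiodic and `2h`-periodic if and only if it is `h`-antiperiodic, which leaves
`2 ^ h` of them.
-/

open Function

section Burnside

theorem sum_range_gcd_eq_sum_divisors {M : Type*} [AddCommMonoid M] (N : ℕ) (F : ℕ → M) :
    ∑ j ∈ Finset.range N, F (N.gcd j) = ∑ k ∈ N.divisors, k.totient • F (N / k) := by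
  rcases eq_or_ne N 0 with rfl | hN
  · simp
  have hgcd : ∀ j ∈ Finset.range N, N.gcd j ∈ N.divisors := fun j _ =>
    Nat.mem_divisors.mpr ⟨Nat.gcd_dvd_left N j, hN⟩
  calc ∑ j ∈ Finset.range N, F (N.gcd j)
      = ∑ d ∈ N.divisors, ∑ j ∈ Finset.range N with N.gcd j = d, F d :=
        (Finset.sum_fiberwise_of_maps_to' hgcd F).symm
    _ = ∑ d ∈ N.divisors, (N / d).totient • F (N / (N / d)) :=
        Finset.sum_congr rfl fun d hd => by
          have hdvd := Nat.dvd_of_mem_divisors hd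
          rw [Finset.sum_const, Nat.totient_div_of_dvd hdvd, Nat.div_div_self hdvd hN]
    _ = ∑ k ∈ N.divisors, k.totient • F (N / k) :=
        Nat.sum_div_divisors N fun k => k.totient • F (N / k)

variable {G X : Type*} [Group G] [MulAction G X] {g : G}

theorem mem_orbit_zpowers_iff_exists_pow_smul (hg : IsOfFinOrder g) {x y : X} :
    y ∈ MulAction.orbit (Subgroup.zpowers g) x ↔ ∃ i : ℕ, y = g ^ i • x := by
  constructor
  · rintro ⟨⟨_, hmem⟩, rfl⟩
    obtain ⟨i, rfl⟩ := hg.mem_powers_iff_mem_zpowers.mpr hmem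
    exact ⟨i, rfl⟩
  · rintro ⟨i, rfl⟩
    exact ⟨⟨g ^ i, Subgroup.npow_mem_zpowers g i⟩, rfl⟩

theorem fixedBy_pow_gcd_orderOf (g : G) (j : ℕ) :
    MulAction.fixedBy X (g ^ (orderOf g).gcd j) = MulAction.fixedBy X (g ^ j) := by
  ext x
  simp only [MulAction.mem_fixedBy, MulAction.pow_smul_eq_iff_period_dvd, Nat.dvd_gcd_iff,
    MulAction.period_dvd_orderOf, true_and]

theorem card_orbits_zpowers_mul_orderOf [Finite X] (hg : IsOfFinOrder g) :
    Nat.card (MulAction.orbitRel.Quotient (Subgroup.zpowers g) X) * orderOf g =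
      ∑ k ∈ (orderOf g).divisors,
        k.totient * Nat.card (MulAction.fixedBy X (g ^ (orderOf g / k))) := by
  have : Finite (Subgroup.zpowers g) := hg.finite_zpowers
  have := Fintype.ofFinite (Subgroup.zpowers g)
  calc Nat.card (MulAction.orbitRel.Quotient (Subgroup.zpowers g) X) * orderOf g
      = ∑ a : Subgroup.zpowers g, Nat.card (MulAction.fixedBy X a) := by
        rw [← Nat.card_zpowers, ← Nat.card_prod, ← Nat.card_sigma]
        exact (Nat.card_congr (MulAction.sigmaFixedByEquivOrbitsProdGroup _ X)).symm
    _ = ∑ j : Fin (orderOf g), Nat.card (MulAction.fixedBy X (g ^ (j : ℕ))) :=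
        ((finEquivZPowers hg).sum_comp fun a => Nat.card (MulAction.fixedBy X a)).symm
    _ = ∑ j ∈ Finset.range (orderOf g),
          Nat.card (MulAction.fixedBy X (g ^ (orderOf g).gcd j)) := by
        simp only [fixedBy_pow_gcd_orderOf]
        exact Fin.sum_univ_eq_sum_range (fun j => Nat.card (MulAction.fixedBy X (g ^ j))) _
    _ = ∑ k ∈ (orderOf g).divisors,
          k.totient * Nat.card (MulAction.fixedBy X (g ^ (orderOf g / k))) :=
        sum_range_gcd_eq_sum_divisors _ fun d => Nat.card (MulAction.fixedBy X (g ^ d))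

end Burnside

section Antiperiodic

theorem not_periodic_of_antiperiodic_nsmul {α R : Type*} [AddMonoid α] [Ring R] [CharZero R]
    {f : α → Rˣ} {c : α} {m : ℕ} (hf : Antiperiodic f (m • c)) : ¬ Periodic f c :=
  fun hper => units_ne_neg_self (f 0) ((hper.nsmul m 0).symm.trans (hf 0))

theorem antiperiodic_odd_nsmul_and_periodic_iff {α β : Type*} [AddGroup α] [InvolutiveNeg β]
    {f : α → β} {c : α} {k : ℕ} (hk : Odd k) :
    Antiperiodic f (k • c) ∧ Periodic f (2 • c) ↔ Antiperiodic f c := by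
  obtain ⟨m, rfl⟩ := hk
  constructor
  · rintro ⟨hanti, hper⟩
    have hc : -(m • 2 • c) + (2 * m + 1) • c = c := by
      rw [← mul_nsmul, add_nsmul, one_nsmul, neg_add_cancel_left]
    exact hc ▸ (hper.nsmul m).neg.add_antiperiod hanti
  · exact fun hanti => ⟨hanti.odd_nsmul_antiperiodic m, hanti.periodic⟩

theorem antiperiodic_add_zsmul_eq {α β : Type*} [AddGroup α] [Group β] [HasDistribNeg β]
    {f : α → β} {c : α} (hf : Antiperiodic f c) (x : α) (m : ℤ) :
    f (x + m • c) = (-1) ^ m * f x := by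
  obtain ⟨r, rfl | rfl⟩ := Int.even_or_odd' m
  · rw [hf.even_zsmul_periodic r x, (even_two_mul r).neg_one_zpow, one_mul]
  · rw [hf.odd_zsmul_antiperiodic r x, (odd_two_mul_add_one r).neg_one_zpow, neg_one_mul]

theorem divModEquiv_add_natCast (n : ℕ) [NeZero n] (x : ℤ) :
    Int.divModEquiv n (x + n) = ((Int.divModEquiv n x).1 + 1, (Int.divModEquiv n x).2) := by
  rw [← Equiv.eq_symm_apply]
  conv_lhs => rw [← (Int.divModEquiv n).symm_apply_apply x]
  simp only [Int.divModEquiv_symm_apply]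
  ring

/-- The `n`-antiperiodic sequences in `β` indexed by `ℤ`. For `β = ℤˣ` they are
the extensions of the sign vectors of length `n`, and `zeta n` acts on them by translation. -/
abbrev AntiperiodicSeq (n : ℕ) (β : Type*) [Neg β] : Type _ :=
  {f : ℤ → β // Antiperiodic f (n : ℤ)}

/-- Restriction of antiperiodic sequences to `0, …, n - 1`, as a bijection. The inverse sends `d`
to the sequence with value `(-1) ^ q * d r` at `q * n + r`, where `0 ≤ r < n`. -/
def antiperiodicEquiv (n : ℕ) [NeZero n] (β : Type*) [Group β] [HasDistribNeg β] :
    AntiperiodicSeq n β ≃ (Fin n → β) where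
  toFun f k := f.1 (k : ℕ)
  invFun d :=
    ⟨fun x => (-1) ^ (Int.divModEquiv n x).1 * d (Int.divModEquiv n x).2, fun x => by
      simp only [divModEquiv_add_natCast, zpow_add_one, mul_neg_one, neg_mul]⟩
  left_inv f := by
    ext x
    change (-1) ^ _ * f.1 _ = f.1 x
    rw [← antiperiodic_add_zsmul_eq f.2, add_comm]
    exact congrArg f.1 ((Int.divModEquiv n).symm_apply_apply x)
  right_inv d := by
    ext k
    have hk : Int.divModEquiv n (k : ℕ) = (0, k) := by
      rw [← Equiv.eq_symm_apply, Int.divModEquiv_symm_apply, zero_mul, zero_add]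
    simp only [hk, zpow_zero, one_mul]

@[simp]
theorem antiperiodicEquiv_apply {n : ℕ} [NeZero n] {β : Type*} [Group β] [HasDistribNeg β]
    (f : AntiperiodicSeq n β) (k : Fin n) : antiperiodicEquiv n β f k = f.1 (k : ℕ) :=
  rfl

theorem card_antiperiodicSeq (n : ℕ) [NeZero n] (β : Type*) [Group β] [HasDistribNeg β] :
    Nat.card (AntiperiodicSeq n β) = Nat.card β ^ n := by
  rw [Nat.card_congr (antiperiodicEquiv n β), Nat.card_fun, Nat.card_fin]

end Antiperiodic

section Zeta

variable {n : ℕ} [NeZero n]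

theorem zeta_antiperiodicEquiv (f : AntiperiodicSeq n ℤˣ) :
    zeta n (antiperiodicEquiv n ℤˣ f) =
      antiperiodicEquiv n ℤˣ ⟨fun x => f.1 (x - 1), f.2.sub_const 1⟩ := by
  ext1 k
  simp only [zeta, antiperiodicEquiv_apply]
  split_ifs with hk
  · rw [← f.2.sub_eq, hk, Nat.cast_pred (NeZero.pos n)]
    exact congrArg f.1 (by push_cast; ring)
  · rw [Nat.cast_pred (Nat.pos_of_ne_zero hk)]

theorem zeta_iterate_antiperiodicEquiv (f : AntiperiodicSeq n ℤˣ) (j : ℕ) :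
    (zeta n)^[j] (antiperiodicEquiv n ℤˣ f) =
      antiperiodicEquiv n ℤˣ ⟨fun x => f.1 (x - j), f.2.sub_const j⟩ := by
  induction j with
  | zero => simp only [iterate_zero_apply, Nat.cast_zero, sub_zero]
  | succ j ih =>
    rw [iterate_succ_apply', ih, zeta_antiperiodicEquiv]
    simp only [sub_sub, Nat.cast_succ, add_comm]

theorem antiperiodicEquiv_mem_fixedPoints_iff (f : AntiperiodicSeq n ℤˣ) (j : ℕ) :
    antiperiodicEquiv n ℤˣ f ∈ fixedPoints (zeta n)^[j] ↔ Periodic f.1 (j : ℤ) := by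
  rw [mem_fixedPoints, IsFixedPt, zeta_iterate_antiperiodicEquiv, Equiv.apply_eq_iff_eq,
    Subtype.ext_iff]
  refine ⟨fun h x => ?_, fun h => funext h.sub_eq⟩
  simpa only [add_sub_cancel_right] using (congrFun h (x + j)).symm

theorem zeta_iterate_two_mul (n : ℕ) [NeZero n] : (zeta n)^[2 * n] = id := by
  funext d
  obtain ⟨f, rfl⟩ := (antiperiodicEquiv n ℤˣ).surjective d
  refine (antiperiodicEquiv_mem_fixedPoints_iff f (2 * n)).mpr ?_
  exact_mod_cast f.2.periodic_two_mul

theorem zeta_iterate_one_ne_one {j : ℕ} (hj : 0 < j) (hjn : j < 2 * n) :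
    (zeta n)^[j] 1 ≠ 1 := by
  intro hfix
  obtain ⟨f, hf⟩ := (antiperiodicEquiv n ℤˣ).surjective 1
  have hper : Periodic f.1 (j : ℤ) := by
    rwa [← antiperiodicEquiv_mem_fixedPoints_iff, hf]
  have hone : ∀ k : ℕ, k < n → f.1 k = 1 := fun k hk => congrFun hf ⟨k, hk⟩
  have hneg : ∀ k : ℕ, k < n → f.1 (k + n) = -1 := fun k hk => by rw [f.2, hone k hk]
  -- `f` is `1` on `[0, n)` and `-1` on `[n, 2n)`; translation by `j` maps one point of the
  -- first interval into the second.
  obtain ⟨k, l, hk, hl, hkl⟩ : ∃ k l : ℕ, k < n ∧ l < n ∧ k + j = l + n := by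
    rcases le_total j n with hle | hle
    · exact ⟨n - j, 0, by omega, by omega, by omega⟩
    · exact ⟨0, j - n, by omega, by omega, by omega⟩
  have hshift : f.1 (l + n) = f.1 k := by
    rw [← hper k]
    exact congrArg f.1 (mod_cast hkl.symm)
  rw [hneg l hl, hone k hk] at hshift
  exact neg_units_ne_self 1 hshift

theorem zeta_bijective (n : ℕ) [NeZero n] : Bijective (zeta n) := by
  obtain ⟨m, hm⟩ := Nat.exists_eq_succ_of_ne_zero (mul_ne_zero two_ne_zero (NeZero.ne n))
  have hid := hm ▸ zeta_iterate_two_mul n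
  exact ⟨.of_comp (f := (zeta n)^[m]) (by rw [← iterate_succ, hid]; exact injective_id),
    .of_comp (g := (zeta n)^[m]) (by rw [← iterate_succ', hid]; exact surjective_id)⟩

/-- The signed cyclic shift `zeta n` as an element of the permutation group of the sign vectors of
length `n`, so that group-theoretic results apply to it. -/
noncomputable def zetaPerm (n : ℕ) [NeZero n] : Equiv.Perm (Fin n → ℤˣ) :=
  Equiv.ofBijective (zeta n) (zeta_bijective n)

theorem zetaPerm_pow_apply (j : ℕ) (d : Fin n → ℤˣ) :
    (zetaPerm n ^ j) d = (zeta n)^[j] d := by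
  rw [Equiv.Perm.coe_pow]
  rfl

theorem orderOf_zetaPerm (n : ℕ) [NeZero n] : orderOf (zetaPerm n) = 2 * n := by
  refine (orderOf_eq_iff (mul_pos two_pos (NeZero.pos n))).mpr ⟨?_, fun j hj hpos h => ?_⟩
  · ext1 d
    rw [zetaPerm_pow_apply, zeta_iterate_two_mul, id, Equiv.Perm.one_apply]
  · refine zeta_iterate_one_ne_one hpos hj ?_
    rw [← zetaPerm_pow_apply, h, Equiv.Perm.one_apply]

theorem fixedPoints_zeta_iterate_eq_empty_of_dvd {g : ℕ} (hg : g ∣ n) :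
    fixedPoints (zeta n)^[g] = ∅ := by
  obtain ⟨m, hm⟩ := hg
  refine Set.eq_empty_of_forall_notMem fun d hd => ?_
  obtain ⟨f, rfl⟩ := (antiperiodicEquiv n ℤˣ).surjective d
  refine not_periodic_of_antiperiodic_nsmul (m := m) ?_
    ((antiperiodicEquiv_mem_fixedPoints_iff f g).mp hd)
  simpa only [hm, Nat.cast_mul, nsmul_eq_mul, mul_comm] using f.2

theorem card_fixedPoints_zeta_iterate_two_mul {h k : ℕ} (hk : Odd k) (hn : n = h * k) :
    Nat.card (fixedPoints (zeta n)^[2 * h]) = 2 ^ h := by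
  have : NeZero h := ⟨fun h0 => NeZero.ne n (by rw [hn, h0, zero_mul])⟩
  have hiff (f : ℤ → ℤˣ) : Antiperiodic f (n : ℤ) ∧ Periodic f ((2 * h : ℕ) : ℤ) ↔
      Antiperiodic f (h : ℤ) := by
    simpa only [hn, Nat.cast_mul, nsmul_eq_mul, mul_comm] using
      antiperiodic_odd_nsmul_and_periodic_iff (f := f) (c := (h : ℤ)) hk
  calc Nat.card (fixedPoints (zeta n)^[2 * h])
      = Nat.card {f : AntiperiodicSeq n ℤˣ // Periodic f.1 ((2 * h : ℕ) : ℤ)} :=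
        Nat.card_congr <| .symm <| (antiperiodicEquiv n ℤˣ).subtypeEquiv fun f =>
          (antiperiodicEquiv_mem_fixedPoints_iff f (2 * h)).symm
    _ = Nat.card (AntiperiodicSeq h ℤˣ) :=
        Nat.card_congr <| (Equiv.subtypeSubtypeEquivSubtypeInter _ _).trans <|
          Equiv.subtypeEquivRight hiff
    _ = 2 ^ h := by
        rw [card_antiperiodicSeq, Nat.card_eq_fintype_card, Fintype.card_units_int]

theorem card_fixedPoints_zeta_iterate_two_mul_div {k : ℕ} (hk : k ∣ 2 * n) :
    Nat.card (fixedPoints (zeta n)^[2 * n / k]) = if Odd k then 2 ^ (n / k) else 0 := by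
  split_ifs with hodd
  · have hkn : k ∣ n := (Nat.coprime_two_right.mpr hodd).dvd_of_dvd_mul_left hk
    rw [Nat.mul_div_assoc 2 hkn]
    exact card_fixedPoints_zeta_iterate_two_mul hodd (Nat.div_mul_cancel hkn).symm
  · obtain ⟨m, rfl⟩ := even_iff_two_dvd.mp (Nat.not_odd_iff_even.mp hodd)
    have hmn : m ∣ n := Nat.dvd_of_mul_dvd_mul_left two_pos hk
    rw [Nat.mul_div_mul_left n m two_pos,
      fixedPoints_zeta_iterate_eq_empty_of_dvd (Nat.div_dvd_of_dvd hmn)]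
    exact Nat.card_of_isEmpty

theorem card_quot_zeta_eq_card_orbits (n : ℕ) [NeZero n] :
    Nat.card (Quot fun d e : Fin n → ℤˣ => ∃ i : ℕ, e = (zeta n)^[i] d) =
      Nat.card (MulAction.orbitRel.Quotient (Subgroup.zpowers (zetaPerm n)) (Fin n → ℤˣ)) := by
  refine Nat.card_congr (Quot.congrRight fun d e => ?_)
  change _ ↔ d ∈ MulAction.orbit (Subgroup.zpowers (zetaPerm n)) e
  rw [MulAction.mem_orbit_symm,
    mem_orbit_zpowers_iff_exists_pow_smul (isOfFinOrder_of_finite (zetaPerm n))]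
  simp only [Equiv.Perm.smul_def, zetaPerm_pow_apply]

theorem filter_odd_divisors_two_mul (n : ℕ) :
    {k ∈ (2 * n).divisors | Odd k} = {k ∈ n.divisors | Odd k} := by
  ext k
  simp only [Finset.mem_filter, Nat.mem_divisors]
  refine and_congr_left fun hk => ?_
  rw [(Nat.coprime_two_right.mpr hk).dvd_mul_left]
  simp

theorem card_quot_zeta_mul_two_mul (n : ℕ) [NeZero n] :
    Nat.card (Quot fun d e : Fin n → ℤˣ => ∃ i : ℕ, e = (zeta n)^[i] d) * (2 * n) =
      ∑ k ∈ n.divisors with Odd k, k.totient * 2 ^ (n / k) := by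
  have hfixed (j : ℕ) :
      MulAction.fixedBy (Fin n → ℤˣ) (zetaPerm n ^ j) = fixedPoints (zeta n)^[j] := by
    ext d
    rw [MulAction.mem_fixedBy, Equiv.Perm.smul_def, zetaPerm_pow_apply, mem_fixedPoints, IsFixedPt]
  have burnside := card_orbits_zpowers_mul_orderOf (X := Fin n → ℤˣ)
    (isOfFinOrder_of_finite (zetaPerm n))
  rw [orderOf_zetaPerm, ← card_quot_zeta_eq_card_orbits] at burnside
  rw [burnside, ← filter_odd_divisors_two_mul, Finset.sum_filter]
  refine Finset.sum_congr rfl fun k hk => ?_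
  rw [hfixed, card_fixedPoints_zeta_iterate_two_mul_div (Nat.dvd_of_mem_divisors hk), mul_ite,
    mul_zero]

end Zeta

/-- `ζ` is a permutation of `{±1}^n` of order exactly `2n`, and the number of
orbits of the cyclic group `⟨ζ⟩` on `{±1}^n` equals
`(1/(2n)) · Σ_{k ∣ n, k odd} φ(k) · 2^(n/k)`. -/
theorem stmt_12 (n : ℕ) (hn : 1 ≤ n) :
    Function.Bijective (zeta n) ∧
    (zeta n)^[2 * n] = id ∧
    (∀ j : ℕ, 0 < j → j < 2 * n → (zeta n)^[j] ≠ id) ∧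
    (Nat.card (Quot fun d e : Fin n → ℤˣ => ∃ i : ℕ, e = (zeta n)^[i] d) : ℚ) =
      (1 / (2 * n)) * ∑ k ∈ (Nat.divisors n).filter (fun k => Odd k),
        (Nat.totient k : ℚ) * 2 ^ (n / k) := by
  have : NeZero n := ⟨by omega⟩
  refine ⟨zeta_bijective n, zeta_iterate_two_mul n,
    fun j hj hjn hid => zeta_iterate_one_ne_one hj hjn (congrFun hid 1), ?_⟩
  have hn0 : (n : ℚ) ≠ 0 := Nat.cast_ne_zero.mpr (NeZero.ne n)
  have hcount := congrArg (Nat.cast : ℕ → ℚ) (card_quot_zeta_mul_two_mul n)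
  push_cast at hcount
  rw [← hcount]
  field_simp
end

section
/- Let n ≥ 2. Any two antipodal point arrangements of cardinality 2n in ℝ² are isomorphic; that is, there is exactly one isomorphism class of antipodal point arrangements of cardinality 2n in the Euclidean plane. -/
/-- The antipodal point arrangement `{±v_1, …, ±v_n} ⊆ ℝ²` determined by a tuple `v`. -/
def antipodalSet2 (n : ℕ) (v : Fin n → ℝ × ℝ) : Set (ℝ × ℝ) :=
  Set.range v ∪ Set.range fun i => -v i

/-- Isomorphism of antipodal point arrangements in `ℝ²`: a bijection `f : S → T` with
`f (-v) = -f v`, such that for every 3-element subset `{v₁, v₂, v₃} ⊆ S` containing no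
antipodal pair, whenever `v₃ = a₁ • v₁ + a₂ • v₂` and `f v₃ = b₁ • f v₁ + b₂ • f v₂`,
one has `(a₁ > 0 ∧ a₂ > 0) ↔ (b₁ > 0 ∧ b₂ > 0)`. -/
def AntipodalIso2 (S T : Set (ℝ × ℝ)) : Prop :=
  ∃ f : ℝ × ℝ → ℝ × ℝ, Set.BijOn f S T ∧ (∀ v ∈ S, f (-v) = -f v) ∧
    ∀ v₁ v₂ v₃ : ℝ × ℝ, v₁ ∈ S → v₂ ∈ S → v₃ ∈ S →
      v₁ ≠ v₂ → v₁ ≠ v₃ → v₂ ≠ v₃ →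
      v₁ ≠ -v₂ → v₁ ≠ -v₃ → v₂ ≠ -v₃ →
      ∀ a₁ a₂ b₁ b₂ : ℝ,
        v₃ = a₁ • v₁ + a₂ • v₂ →
        f v₃ = b₁ • f v₁ + b₂ • f v₂ →
        ((0 < a₁ ∧ 0 < a₂) ↔ (0 < b₁ ∧ 0 < b₂))

/-!
Up to sign, every nonzero vector of the plane is positive for the lexicographic order, i.e. lies in
a half-open half plane. There "`q` is counterclockwise from `p`", that is `0 < det (p, q)`, is a
strict total order on pairwise independent vectors; it is transitive because
`det (p, r) • q = det (q, r) • p + det (p, q) • r`. So each arrangement is `{±u_1, …, ±u_n}` with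
`0 < det (u_i, u_j)` for all `i < j`, and for two such arrangements `±u_i ↦ ±u'_i` preserves the
signs of all `2 × 2` determinants. By Cramer's rule these signs determine the signs of the
coefficients `a₁`, `a₂` in `v₃ = a₁ • v₁ + a₂ • v₂`.
-/

open Function SignType

section OrderedModule

instance posSMulStrictMono_prodLex {α β γ : Type*} [Zero α] [Preorder α] [Preorder β] [Preorder γ]
    [SMul α β] [SMul α γ] [PosSMulStrictMono α β] [PosSMulStrictMono α γ] :
    PosSMulStrictMono α (β ×ₗ γ) where
  smul_lt_smul_of_pos_left a ha x y hxy := by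
    rw [Prod.Lex.lt_iff] at hxy ⊢
    exact hxy.imp (smul_lt_smul_of_pos_left · ha)
      fun h => ⟨congrArg (a • ·) h.1, smul_lt_smul_of_pos_left h.2 ha⟩

lemma exists_units_smul_pos {G : Type*} [AddCommGroup G] [LinearOrder G] [IsOrderedAddMonoid G]
    {x : G} (hx : x ≠ 0) : ∃ e : ℤˣ, 0 < e • x := by
  rcases hx.lt_or_gt with h | h
  · exact ⟨-1, by simpa [Units.smul_def] using h⟩
  · exact ⟨1, by simpa using h⟩

lemma pos_iff_pos_of_sign_mul_eq {R : Type*} [Ring R] [LinearOrder R] [IsStrictOrderedRing R]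
    {a b c d : R} (hc : c ≠ 0) (hcd : sign c = sign d) (h : sign (a * c) = sign (b * d)) :
    0 < a ↔ 0 < b := by
  rw [sign_mul, sign_mul, ← hcd] at h
  rw [← sign_eq_one_iff, ← sign_eq_one_iff, mul_right_cancel₀ (sign_ne_zero.2 hc) h]

end OrderedModule

lemma exists_equiv_fin_of_isStrictTotalOrder {ι : Type*} [Fintype ι] (r : ι → ι → Prop)
    [IsStrictTotalOrder ι r] {n : ℕ} (hn : Fintype.card ι = n) :
    ∃ σ : Fin n ≃ ι, ∀ ⦃i j⦄, i < j → r (σ i) (σ j) := by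
  classical
  let := linearOrderOfSTO r
  exact ⟨(monoEquivOfFin ι hn).toEquiv, (monoEquivOfFin ι hn).strictMono⟩

lemma bijOn_extend_range {α β γ : Type*} {f : α → β} {g : α → γ} (hf : Injective f)
    (hg : Injective g) (e : β → γ) : Set.BijOn (extend f g e) (Set.range f) (Set.range g) := by
  have hfg : extend f g e ∘ f = g := extend_comp hf g e
  have hinj : Set.InjOn (extend f g e) (Set.range f) := (hfg.symm ▸ hg).injOn_range
  simpa only [← Set.range_comp, hfg] using hinj.bijOn_image

section PlaneDet

/-- The determinant of the `2 × 2` matrix with columns `p` and `q`; over an ordered field it is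
positive when `q` is reached from `p` by a counterclockwise rotation of angle less than `π`. -/
def planeDet {R : Type*} [CommRing R] (p q : R × R) : R := p.1 * q.2 - p.2 * q.1

section CommRing

variable {R : Type*} [CommRing R]

@[simp]
lemma planeDet_self (p : R × R) : planeDet p p = 0 := by
  simp only [planeDet, mul_comm, sub_self]

lemma planeDet_swap (p q : R × R) : planeDet q p = -planeDet p q := by
  simp only [planeDet]
  ring

lemma planeDet_units_smul (d e : ℤˣ) (p q : R × R) :
    planeDet (d • p) (e • q) = ((d * e : ℤˣ) : ℤ) * planeDet p q := by
  simp only [planeDet, Units.smul_def, Prod.smul_fst, Prod.smul_snd]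
  simp only [zsmul_eq_mul, Units.val_mul, Int.cast_mul]
  ring

lemma planeDet_combination_left (a b : R) (p q : R × R) :
    planeDet (a • p + b • q) q = a * planeDet p q := by
  simp only [planeDet, Prod.fst_add, Prod.snd_add, Prod.smul_fst, Prod.smul_snd, smul_eq_mul]
  ring

lemma planeDet_combination_right (a b : R) (p q : R × R) :
    planeDet p (a • p + b • q) = b * planeDet p q := by
  simp only [planeDet, Prod.fst_add, Prod.snd_add, Prod.smul_fst, Prod.smul_snd, smul_eq_mul]
  ring

lemma planeDet_smul_eq_add (p q r : R × R) :
    planeDet p r • q = planeDet q r • p + planeDet p q • r := by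
  ext <;> simp only [planeDet, Prod.fst_add, Prod.snd_add, Prod.smul_fst, Prod.smul_snd,
    smul_eq_mul] <;> ring

lemma planeDet_ne_zero_of_linearIndependent [Nontrivial R] {p q : R × R}
    (h : LinearIndependent R ![p, q]) : planeDet p q ≠ 0 := by
  intro hdet
  rw [planeDet] at hdet
  have hp₂ : q.2 • p + (-p.2) • q = 0 := Prod.ext
    (by simp only [Prod.fst_add, Prod.smul_fst, smul_eq_mul, Prod.fst_zero]
        linear_combination hdet)
    (by simp only [Prod.snd_add, Prod.smul_snd, smul_eq_mul, Prod.snd_zero]; ring)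
  have hp₁ : q.1 • p + (-p.1) • q = 0 := Prod.ext
    (by simp only [Prod.fst_add, Prod.smul_fst, smul_eq_mul, Prod.fst_zero]; ring)
    (by simp only [Prod.snd_add, Prod.smul_snd, smul_eq_mul, Prod.snd_zero]
        linear_combination -hdet)
  exact h.ne_zero 0 (Prod.ext (neg_eq_zero.1 (LinearIndependent.pair_iff.1 h _ _ hp₁).2)
    (neg_eq_zero.1 (LinearIndependent.pair_iff.1 h _ _ hp₂).2))

end CommRing

section LinearOrderedCommRing

variable {R : Type*} [CommRing R] [LinearOrder R] [IsStrictOrderedRing R]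

lemma planeDet_pos_trans {p q r : R × R} (hp : 0 < toLex p) (hq : 0 < toLex q) (hr : 0 < toLex r)
    (hpq : 0 < planeDet p q) (hqr : 0 < planeDet q r) : 0 < planeDet p r := by
  have hpos : 0 < planeDet p r • toLex q := by
    rw [← toLex_smul, planeDet_smul_eq_add, toLex_add, toLex_smul, toLex_smul]
    exact add_pos (smul_pos hqr hp) (smul_pos hpq hr)
  by_contra! hpr
  exact hpos.not_ge (smul_nonpos_of_nonpos_of_nonneg hpr hq.le)

lemma isStrictTotalOrder_planeDet_pos {ι : Type*} {u : ι → R × R} (hpos : ∀ i, 0 < toLex (u i))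
    (hdet : Pairwise fun i j => planeDet (u i) (u j) ≠ 0) :
    IsStrictTotalOrder ι fun i j => 0 < planeDet (u i) (u j) where
  irrefl i := by simp
  trans i j k := planeDet_pos_trans (hpos i) (hpos j) (hpos k)
  trichotomous i j hij hji := by
    rw [planeDet_swap, neg_pos] at hji
    by_contra hne
    exact hdet hne (le_antisymm (not_lt.1 hij) (not_lt.1 hji))

lemma coeffs_pos_iff_of_sign_planeDet_eq {p q p' q' : R × R} {a b a' b' : R}
    (hpq : planeDet p q ≠ 0) (h : sign (planeDet p q) = sign (planeDet p' q'))
    (hleft : sign (planeDet (a • p + b • q) q) = sign (planeDet (a' • p' + b' • q') q'))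
    (hright : sign (planeDet p (a • p + b • q)) = sign (planeDet p' (a' • p' + b' • q'))) :
    (0 < a ∧ 0 < b) ↔ (0 < a' ∧ 0 < b') := by
  rw [planeDet_combination_left, planeDet_combination_left] at hleft
  rw [planeDet_combination_right, planeDet_combination_right] at hright
  exact and_congr (pos_iff_pos_of_sign_mul_eq hpq h hleft) (pos_iff_pos_of_sign_mul_eq hpq h hright)

end LinearOrderedCommRing

end PlaneDet

section SignedPoint

/-- The points `±u i` of the antipodal arrangement of a family `u`, labelled by an index and a
sign, so that maps between arrangements can be described on labels. -/
def signedPoint {ι M : Type*} [AddCommGroup M] (u : ι → M) (a : ι × ℤˣ) : M := a.2 • u a.1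

section AddCommGroup

variable {ι M : Type*} [AddCommGroup M]

lemma neg_signedPoint (u : ι → M) (a : ι × ℤˣ) : -signedPoint u a = signedPoint u (a.1, -a.2) := by
  simp only [signedPoint, Units.smul_def, Units.val_neg, neg_smul]

lemma fst_ne_fst_of_signedPoint_ne {u : ι → M} {a b : ι × ℤˣ}
    (h : signedPoint u a ≠ signedPoint u b) (h' : signedPoint u a ≠ -signedPoint u b) :
    a.1 ≠ b.1 := by
  intro hab
  have hne : a.2 ≠ b.2 := fun he => h (congrArg (signedPoint u) (Prod.ext hab he))
  rw [neg_signedPoint] at h'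
  exact h' (congrArg (signedPoint u) (Prod.ext hab (Int.units_ne_iff_eq_neg.1 hne)))

lemma range_signedPoint (u : ι → M) :
    Set.range (signedPoint u) = Set.range u ∪ Set.range fun i => -u i := by
  ext x
  constructor
  · rintro ⟨⟨i, e⟩, rfl⟩
    rcases Int.units_eq_one_or e with rfl | rfl
    · exact Or.inl ⟨i, by simp [signedPoint]⟩
    · exact Or.inr ⟨i, by simp [signedPoint, Units.smul_def]⟩
  · rintro (⟨i, rfl⟩ | ⟨i, rfl⟩)
    · exact ⟨(i, 1), by simp [signedPoint]⟩
    · exact ⟨(i, -1), by simp [signedPoint, Units.smul_def]⟩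

lemma range_signedPoint_units_smul (e : ι → ℤˣ) (u : ι → M) :
    Set.range (signedPoint fun i => e i • u i) = Set.range (signedPoint u) := by
  ext x
  constructor
  · rintro ⟨⟨i, d⟩, rfl⟩
    exact ⟨(i, d * e i), by simp only [signedPoint, smul_smul]⟩
  · rintro ⟨⟨i, d⟩, rfl⟩
    exact ⟨(i, d * (e i)⁻¹), by simp only [signedPoint, smul_smul, inv_mul_cancel_right]⟩

end AddCommGroup

section CommRing

variable {ι R : Type*} [CommRing R] {u : ι → R × R}

lemma planeDet_signedPoint (u : ι → R × R) (a b : ι × ℤˣ) :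
    planeDet (signedPoint u a) (signedPoint u b) =
      ((a.2 * b.2 : ℤˣ) : ℤ) * planeDet (u a.1) (u b.1) :=
  planeDet_units_smul a.2 b.2 (u a.1) (u b.1)

lemma planeDet_signedPoint_ne_zero (hu : Pairwise fun i j => planeDet (u i) (u j) ≠ 0)
    {a b : ι × ℤˣ} (hab : a.1 ≠ b.1) : planeDet (signedPoint u a) (signedPoint u b) ≠ 0 := by
  rw [planeDet_signedPoint]
  exact (((a.2 * b.2).isUnit.map (Int.castRingHom R)).mul_right_eq_zero).not.2 (hu hab)

lemma signedPoint_injective [Module.IsTorsionFree ℤ R] (hu₀ : ∀ i, u i ≠ 0)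
    (hu : Pairwise fun i j => planeDet (u i) (u j) ≠ 0) : Injective (signedPoint u) := by
  intro a b hab
  have hfst : a.1 = b.1 := by
    by_contra hne
    exact planeDet_signedPoint_ne_zero hu hne (by rw [hab, planeDet_self])
  have hsmul : (a.2 : ℤ) • u a.1 = (b.2 : ℤ) • u a.1 := by
    simpa only [signedPoint, Units.smul_def, ← hfst] using hab
  exact Prod.ext hfst (Units.ext (smul_left_injective ℤ (hu₀ a.1) hsmul))

end CommRing

lemma sign_planeDet_signedPoint_eq {ι R : Type*} [CommRing R] [LinearOrder R]
    [IsStrictOrderedRing R] {u u' : ι → R × R}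
    (h : ∀ i j, sign (planeDet (u i) (u j)) = sign (planeDet (u' i) (u' j))) (a b : ι × ℤˣ) :
    sign (planeDet (signedPoint u a) (signedPoint u b)) =
      sign (planeDet (signedPoint u' a) (signedPoint u' b)) := by
  rw [planeDet_signedPoint, planeDet_signedPoint, sign_mul, sign_mul, h]

end SignedPoint

section IsCounterclockwise

/-- A family of nonzero vectors listed in counterclockwise order, all angles between them being less
than `π`. Nonvanishing is a separate field because the determinants say nothing about a
one-member family. -/
structure IsCounterclockwise {ι R : Type*} [LT ι] [CommRing R] [LinearOrder R] (u : ι → R × R) :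
    Prop where
  ne_zero : ∀ i, u i ≠ 0
  planeDet_pos : ∀ ⦃i j⦄, i < j → 0 < planeDet (u i) (u j)

variable {ι R : Type*} [CommRing R] [LinearOrder R]

lemma IsCounterclockwise.sign_planeDet_eq [LinearOrder ι] [IsStrictOrderedRing R]
    {u u' : ι → R × R} (hu : IsCounterclockwise u) (hu' : IsCounterclockwise u') (i j : ι) :
    sign (planeDet (u i) (u j)) = sign (planeDet (u' i) (u' j)) := by
  rcases lt_trichotomy i j with hij | rfl | hji
  · rw [sign_pos (hu.planeDet_pos hij), sign_pos (hu'.planeDet_pos hij)]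
  · rw [planeDet_self, planeDet_self]
  · rw [planeDet_swap (u j), planeDet_swap (u' j), Left.sign_neg, Left.sign_neg,
      sign_pos (hu.planeDet_pos hji), sign_pos (hu'.planeDet_pos hji)]

lemma IsCounterclockwise.pairwise_planeDet_ne_zero [LinearOrder ι] {u : ι → R × R}
    (hu : IsCounterclockwise u) : Pairwise fun i j => planeDet (u i) (u j) ≠ 0 := by
  intro i j hij
  rcases hij.lt_or_gt with hij | hji
  · exact (hu.planeDet_pos hij).ne'
  · rw [planeDet_swap, neg_ne_zero]
    exact (hu.planeDet_pos hji).ne'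

lemma exists_units_smul_equiv_isCounterclockwise [IsStrictOrderedRing R] [Fintype ι] {v : ι → R × R}
    (hv₀ : ∀ i, v i ≠ 0) (hv : Pairwise fun i j => planeDet (v i) (v j) ≠ 0) {n : ℕ}
    (hn : Fintype.card ι = n) :
    ∃ (e : ι → ℤˣ) (σ : Fin n ≃ ι), IsCounterclockwise ((fun i => e i • v i) ∘ σ) := by
  choose e he using fun i => exists_units_smul_pos (toLex_eq_zero.not.2 (hv₀ i))
  have hdet : Pairwise fun i j => planeDet (e i • v i) (e j • v j) ≠ 0 := fun i j hij =>
    planeDet_signedPoint_ne_zero hv (a := (i, e i)) (b := (j, e j)) hij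
  have : IsStrictTotalOrder ι fun i j => 0 < planeDet (e i • v i) (e j • v j) :=
    isStrictTotalOrder_planeDet_pos he hdet
  obtain ⟨σ, hσ⟩ := exists_equiv_fin_of_isStrictTotalOrder
    (fun i j => 0 < planeDet (e i • v i) (e j • v j)) hn
  exact ⟨e, σ, fun i => (smul_ne_zero_iff_ne _).2 (hv₀ _), hσ⟩

end IsCounterclockwise

section Arrangement

variable {n : ℕ}

lemma antipodalSet2_eq_range_signedPoint (v : Fin n → ℝ × ℝ) :
    antipodalSet2 n v = Set.range (signedPoint v) :=
  (range_signedPoint v).symm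

lemma antipodalSet2_comp_of_surjective {m : ℕ} {σ : Fin m → Fin n} (hσ : Surjective σ)
    (v : Fin n → ℝ × ℝ) : antipodalSet2 m (v ∘ σ) = antipodalSet2 n v :=
  congrArg₂ (· ∪ ·) (hσ.range_comp v) (hσ.range_comp fun i => -v i)

lemma exists_isCounterclockwise_antipodalSet2_eq {v : Fin n → ℝ × ℝ} (hv₀ : ∀ i, v i ≠ 0)
    (hv : ∀ i j, i ≠ j → LinearIndependent ℝ ![v i, v j]) :
    ∃ u : Fin n → ℝ × ℝ, IsCounterclockwise u ∧ antipodalSet2 n u = antipodalSet2 n v := by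
  obtain ⟨e, σ, hu⟩ := exists_units_smul_equiv_isCounterclockwise hv₀
    (fun i j hij => planeDet_ne_zero_of_linearIndependent (hv i j hij)) (Fintype.card_fin n)
  refine ⟨_, hu, ?_⟩
  rw [antipodalSet2_comp_of_surjective σ.surjective, antipodalSet2_eq_range_signedPoint,
    antipodalSet2_eq_range_signedPoint, range_signedPoint_units_smul]

theorem antipodalIso2_of_sign_planeDet_eq {u u' : Fin n → ℝ × ℝ} (hu₀ : ∀ i, u i ≠ 0)
    (hu₀' : ∀ i, u' i ≠ 0) (hu : Pairwise fun i j => planeDet (u i) (u j) ≠ 0)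
    (h : ∀ i j, sign (planeDet (u i) (u j)) = sign (planeDet (u' i) (u' j))) :
    AntipodalIso2 (antipodalSet2 n u) (antipodalSet2 n u') := by
  have hu' : Pairwise fun i j => planeDet (u' i) (u' j) ≠ 0 := fun i j hij =>
    sign_ne_zero.1 (h i j ▸ sign_ne_zero.2 (hu hij))
  have hinj : Injective (signedPoint u) := signedPoint_injective hu₀ hu
  have hsign := sign_planeDet_signedPoint_eq h
  let f := extend (signedPoint u) (signedPoint u') 0
  have hf : ∀ a, f (signedPoint u a) = signedPoint u' a := hinj.extend_apply _ _
  rw [antipodalSet2_eq_range_signedPoint, antipodalSet2_eq_range_signedPoint]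
  refine ⟨f, bijOn_extend_range hinj (signedPoint_injective hu₀' hu') 0, ?_, ?_⟩
  · rintro _ ⟨a, rfl⟩
    rw [neg_signedPoint, hf, hf, neg_signedPoint]
  · rintro _ _ _ ⟨a, rfl⟩ ⟨b, rfl⟩ ⟨c, rfl⟩ hab - - hab' - - a₁ a₂ b₁ b₂ hc hc'
    rw [hf, hf, hf] at hc'
    exact coeffs_pos_iff_of_sign_planeDet_eq
      (planeDet_signedPoint_ne_zero hu (fst_ne_fst_of_signedPoint_ne hab hab')) (hsign a b)
      (hc ▸ hc' ▸ hsign c b) (hc ▸ hc' ▸ hsign a c)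

end Arrangement

/-- for `n ≥ 2`, any two antipodal point arrangements of cardinality `2n` in
`ℝ²` are isomorphic. -/
theorem stmt_15 (n : ℕ) (hn : 2 ≤ n) (v w : Fin n → ℝ × ℝ)
    (hv0 : ∀ i, v i ≠ 0) (hv : ∀ i j, i ≠ j → LinearIndependent ℝ ![v i, v j])
    (hw0 : ∀ i, w i ≠ 0) (hw : ∀ i j, i ≠ j → LinearIndependent ℝ ![w i, w j]) :
    AntipodalIso2 (antipodalSet2 n v) (antipodalSet2 n w) := by
  obtain ⟨u, hu, huv⟩ := exists_isCounterclockwise_antipodalSet2_eq hv0 hv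
  obtain ⟨u', hu', huw⟩ := exists_isCounterclockwise_antipodalSet2_eq hw0 hw
  rw [← huv, ← huw]
  exact antipodalIso2_of_sign_planeDet_eq hu.ne_zero hu'.ne_zero hu.pairwise_planeDet_ne_zero
    (hu.sign_planeDet_eq hu')
end
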